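/- For a finite graph Δ, the number ℓ(Δ) produced by the recursive procedure (repeatedly deleting a free vertex of the current induced subgraph and counting the number of deletions performed until no free vertex remains) does not depend on the choices of free vertices made; it equals the maximum number of collapses that can be performed starting from Δ. -/

import Mathlib

/-- An abstract simplicial complex on the vertex set `{0, …, n}`. -/
structure SComplex (n : ℕ) where
  faces : Set (Finset (Fin (n + 1)))
  down_closed : ∀ {s t : Finset (Fin (n + 1))}, s ∈ faces → t ⊆ s → t ∈ faces

/-- A simplicial complex is a graph if it is (at most) 1-dimensional. -/
def SComplex.IsGraph {n : ℕ} (Δ : SComplex n) : Prop :=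
  ∀ s ∈ Δ.faces, s.card ≤ 2

/-- `v` is a free vertex of the subcomplex of `Δ` induced on `W`: it belongs to exactly one
edge of the induced subcomplex. -/
def FreeVertexIn {n : ℕ} (Δ : SComplex n) (W : Finset (Fin (n + 1))) (v : Fin (n + 1)) :
    Prop :=
  v ∈ W ∧ ∃! e : Finset (Fin (n + 1)), e ∈ Δ.faces ∧ e ⊆ W ∧ e.card = 2 ∧ v ∈ e

/-- `l` is a collapse sequence for `Δ` starting from the vertex subset `W`: each entry in turn
is a free vertex of the complex induced on the remaining vertices, and is deleted. -/
def IsCollapseSeq {n : ℕ} (Δ : SComplex n) : Finset (Fin (n + 1)) → List (Fin (n + 1)) → Prop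
  | _, [] => True
  | W, v :: l => FreeVertexIn Δ W v ∧ IsCollapseSeq Δ (W.erase v) l

/-- A collapse sequence is maximal (i.e. is a run of the recursive procedure) if after
performing it no free vertex remains. -/
def IsMaximalCollapseSeq {n : ℕ} (Δ : SComplex n) (W : Finset (Fin (n + 1)))
    (l : List (Fin (n + 1))) : Prop :=
  IsCollapseSeq Δ W l ∧ ∀ v, ¬ FreeVertexIn Δ (W \ l.toFinset) v

open Classical in
noncomputable def edgesIn {n : ℕ} (Δ : SComplex n) (W : Finset (Fin (n + 1))) :
    Finset (Finset (Fin (n + 1))) :=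
  W.powerset.filter (fun e => e ∈ Δ.faces ∧ e.card = 2)

theorem mem_edgesIn {n : ℕ} (Δ : SComplex n) (W e : Finset (Fin (n + 1))) :
    e ∈ edgesIn Δ W ↔ e ⊆ W ∧ e ∈ Δ.faces ∧ e.card = 2 := by
  simp [edgesIn]

theorem edgesIn_erase {n : ℕ} (Δ : SComplex n) (W : Finset (Fin (n + 1))) (v : Fin (n + 1))
    (h : FreeVertexIn Δ W v) : (edgesIn Δ W).card = (edgesIn Δ (W.erase v)).card + 1 := by
  obtain ⟨_, e, ⟨he1, he2, he3, he4⟩, hu⟩ := h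
  have hmem : e ∈ edgesIn Δ W := (mem_edgesIn _ _ _).2 ⟨he2, he1, he3⟩
  have heq : edgesIn Δ (W.erase v) = (edgesIn Δ W).erase e := by
    ext f
    rw [Finset.mem_erase, mem_edgesIn, mem_edgesIn, Finset.subset_erase]
    constructor
    · rintro ⟨⟨a, b⟩, c, d⟩
      exact ⟨fun h => b (h ▸ he4), a, c, d⟩
    · rintro ⟨a, b, c, d⟩
      exact ⟨⟨b, fun hv => a (hu f ⟨c, b, d, hv⟩)⟩, c, d⟩
  rw [heq, Finset.card_erase_add_one hmem]

theorem erase_sdiff_cons {n : ℕ} (W : Finset (Fin (n + 1))) (v : Fin (n + 1))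
    (l : List (Fin (n + 1))) : W \ (v :: l).toFinset = W.erase v \ l.toFinset := by
  ext x
  simp only [Finset.mem_sdiff, List.mem_toFinset, List.mem_cons, Finset.mem_erase]
  tauto

theorem edgesIn_seq {n : ℕ} (Δ : SComplex n) (l : List (Fin (n + 1))) :
    ∀ W, IsCollapseSeq Δ W l →
      (edgesIn Δ W).card = l.length + (edgesIn Δ (W \ l.toFinset)).card := by
  induction l with
  | nil => intro W _; simp
  | cons v l ih =>
    rintro W ⟨h1, h2⟩
    rw [erase_sdiff_cons, edgesIn_erase Δ W v h1, ih _ h2, List.length_cons]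
    omega

theorem core_subset {n : ℕ} (Δ : SComplex n) (S : Finset (Fin (n + 1)))
    (hS : ∀ v ∈ S, ∃ e ∈ edgesIn Δ S, ∃ f ∈ edgesIn Δ S, v ∈ e ∧ v ∈ f ∧ e ≠ f)
    (l : List (Fin (n + 1))) :
    ∀ W, S ⊆ W → IsCollapseSeq Δ W l → S ⊆ W \ l.toFinset := by
  induction l with
  | nil => intro W h _; simpa using h
  | cons v l ih =>
    rintro W hW ⟨h1, h2⟩
    rw [erase_sdiff_cons]
    refine ih _ (Finset.subset_erase.2 ⟨hW, fun hv => ?_⟩) h2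
    obtain ⟨e, he, f, hf, hve, hvf, hne⟩ := hS v hv
    rw [mem_edgesIn] at he hf
    exact hne (h1.2.unique ⟨he.2.1, he.1.trans hW, he.2.2, hve⟩
      ⟨hf.2.1, hf.1.trans hW, hf.2.2, hvf⟩)

theorem collapse_le_maximal {n : ℕ} (Δ : SComplex n) (W : Finset (Fin (n + 1)))
    (l m : List (Fin (n + 1))) (hm : IsMaximalCollapseSeq Δ W m) (hl : IsCollapseSeq Δ W l) :
    l.length ≤ m.length := by
  set T := W \ m.toFinset with hT
  set S := (edgesIn Δ T).biUnion id with hSdef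
  have hsub : ∀ e ∈ edgesIn Δ T, e ∈ edgesIn Δ S := fun e he =>
    (mem_edgesIn _ _ _).2 ⟨Finset.subset_biUnion_of_mem id he, ((mem_edgesIn _ _ _).1 he).2⟩
  have hST : S ⊆ T := Finset.biUnion_subset.2 fun e he => ((mem_edgesIn _ _ _).1 he).1
  have hS : ∀ v ∈ S, ∃ e ∈ edgesIn Δ S, ∃ f ∈ edgesIn Δ S, v ∈ e ∧ v ∈ f ∧ e ≠ f := by
    intro v hv
    obtain ⟨e, he, hve⟩ := Finset.mem_biUnion.1 hv
    have he' := (mem_edgesIn _ _ _).1 he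
    by_contra hcon
    refine hm.2 v ⟨hST hv, e, ⟨he'.2.1, he'.1, he'.2.2, hve⟩, ?_⟩
    rintro f ⟨f1, f2, f3, f4⟩
    by_contra hne
    exact hcon ⟨e, hsub e he, f, hsub f ((mem_edgesIn _ _ _).2 ⟨f2, f1, f3⟩), hve, f4,
      fun h => hne h.symm⟩
  have hSl := core_subset Δ S hS l W (hST.trans Finset.sdiff_subset) hl
  have hle : (edgesIn Δ T).card ≤ (edgesIn Δ (W \ l.toFinset)).card := by
    refine Finset.card_le_card fun e he => ?_
    have := (mem_edgesIn _ _ _).1 (hsub e he)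
    exact (mem_edgesIn _ _ _).2 ⟨this.1.trans hSl, this.2⟩
  have a := edgesIn_seq Δ l W hl
  have b := edgesIn_seq Δ m W hm.1
  rw [← hT] at b
  omega

/-- **Statement 11.** For a finite graph `Δ`, the number `ℓ(Δ)` produced by the recursive
procedure (repeatedly deleting a free vertex until none remains) does not depend on the choice
of free vertices: any two maximal collapse sequences have the same length, and this common
length is the maximum number of collapses that can be performed starting from `Δ`. -/
theorem collapse_length_welldefined {n : ℕ} (Δ : SComplex n) (hΔ : Δ.IsGraph)
    (l₁ l₂ : List (Fin (n + 1)))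
    (h₁ : IsMaximalCollapseSeq Δ Finset.univ l₁)
    (h₂ : IsMaximalCollapseSeq Δ Finset.univ l₂) :
    l₁.length = l₂.length ∧
      ∀ l : List (Fin (n + 1)), IsCollapseSeq Δ Finset.univ l → l.length ≤ l₁.length := by
  exact ⟨le_antisymm (collapse_le_maximal Δ _ _ _ h₂ h₁.1) (collapse_le_maximal Δ _ _ _ h₁ h₂.1),
    fun l hl => collapse_le_maximal Δ _ _ _ h₁ hl⟩
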